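/- arXiv:math/0608226 — 2 statements merged into one kernel-verified Lean document; each statement's English description precedes it below -/
import Mathlib

section
/- Let (M, ν) be a measure space, and let f and (f_k) be real-valued functions in L¹(M, ν). Assume that the sequence (f_k) is dominated in absolute value by a single function in L¹(M, ν), that lim_k ∫_M f_k dν = ∫_M f dν, and that limsup_k f_k(x) ≤ f(x) for ν-almost every x. Then f_k converges to f in L¹(M, ν), i.e. ∫_M |f_k − f| dν → 0 as k → ∞. -/
open MeasureTheory Filter Topology

/-!
From `|a| = 2 a⁺ - a` we get `∫ |fₖ - f| = 2 ∫ (fₖ - f)⁺ - (∫ fₖ - ∫ f)`. The last term tends to `0`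
by hypothesis. The bound `limsup fₖ ≤ f` says that `(fₖ - f)⁺ → 0` almost everywhere, and an upper
bound for `fₖ` dominates these positive parts, so dominated convergence handles the other term.
-/

theorem tendsto_posPart_nhds_zero_iff {ι α : Type*} [AddGroup α] [LinearOrder α]
    [TopologicalSpace α] [OrderTopology α] {l : Filter ι} {u : ι → α} :
    Tendsto (fun k => (u k)⁺) l (𝓝 0) ↔ ∀ ε > 0, ∀ᶠ k in l, u k < ε := by
  refine ⟨fun h ε hε => ?_, fun h => tendsto_order.2 ⟨fun a ha => ?_, fun ε hε => ?_⟩⟩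
  · exact (h.eventually_lt_const hε).mono fun k hk => (posPart_lt.1 hk).1
  · exact Eventually.of_forall fun k => ha.trans_le (posPart_nonneg (u k))
  · exact (h ε hε).mono fun k hk => posPart_lt.2 ⟨hk, hε⟩

section Measure

variable {ι M : Type*} [MeasurableSpace M] {ν : Measure M} {l : Filter ι}

theorem ae_forall_gt_eventually_lt_of_limsup_le {β : Type*} [ConditionallyCompleteLinearOrder β]
    [Countable ι] {u : ι → M → β} {f g : M → β} (hug : ∀ k, ∀ᵐ x ∂ν, u k x ≤ g x)
    (hsup : ∀ᵐ x ∂ν, limsup (fun k => u k x) l ≤ f x) :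
    ∀ᵐ x ∂ν, ∀ b > f x, ∀ᶠ k in l, u k x < b := by
  filter_upwards [ae_all_iff.2 hug, hsup] with x hug_x hsup_x b hb
  exact eventually_lt_of_limsup_lt (hsup_x.trans_lt hb) (isBoundedUnder_of ⟨g x, hug_x⟩)

theorem tendsto_integral_posPart_of_le_of_eventually_lt [l.IsCountablyGenerated]
    {u : ι → M → ℝ} {g : M → ℝ} (hu : ∀ᶠ k in l, AEStronglyMeasurable (u k) ν)
    (hg : Integrable g ν) (hug : ∀ᶠ k in l, ∀ᵐ x ∂ν, u k x ≤ g x)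
    (hlt : ∀ᵐ x ∂ν, ∀ ε > 0, ∀ᶠ k in l, u k x < ε) :
    Tendsto (fun k => ∫ x, (u k x)⁺ ∂ν) l (𝓝 0) := by
  have hmeas : ∀ᶠ k in l, AEStronglyMeasurable (fun x => (u k x)⁺) ν :=
    hu.mono fun k hk => hk.sup aestronglyMeasurable_const
  have hbound : ∀ᶠ k in l, ∀ᵐ x ∂ν, ‖(u k x)⁺‖ ≤ (g x)⁺ := by
    filter_upwards [hug] with k hk
    filter_upwards [hk] with x hx
    rw [Real.norm_of_nonneg (posPart_nonneg _)]
    exact posPart_mono hx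
  have hzero : ∀ᵐ x ∂ν, Tendsto (fun k => (u k x)⁺) l (𝓝 0) :=
    hlt.mono fun x hx => tendsto_posPart_nhds_zero_iff.2 hx
  simpa only [integral_zero] using
    tendsto_integral_filter_of_dominated_convergence _ hmeas hbound hg.pos_part hzero

theorem tendsto_integral_abs_of_tendsto_integral_posPart {u : ι → M → ℝ}
    (hu : ∀ᶠ k in l, Integrable (u k) ν)
    (hpos : Tendsto (fun k => ∫ x, (u k x)⁺ ∂ν) l (𝓝 0))
    (hint : Tendsto (fun k => ∫ x, u k x ∂ν) l (𝓝 0)) :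
    Tendsto (fun k => ∫ x, |u k x| ∂ν) l (𝓝 0) := by
  have hlim : Tendsto (fun k => 2 * ∫ x, (u k x)⁺ ∂ν - ∫ x, u k x ∂ν) l (𝓝 0) := by
    simpa only [mul_zero, sub_zero] using (hpos.const_mul 2).sub hint
  exact hlim.congr' <| hu.mono fun k hk =>
    (integral_abs_eq_two_mul_integral_posPart_sub_integral hk).symm

/- `hsup` spells out `limsup fₖ ≤ f`: without a lower bound, the `limsup` in `ℝ` has the junk value
`0` at points where `fₖ → -∞`. -/
theorem bergman_integration_lemma_id_general [l.IsCountablyGenerated]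
    {f g : M → ℝ} {fk : ι → M → ℝ} (hf : Integrable f ν) (hfk : ∀ᶠ k in l, Integrable (fk k) ν)
    (hg : Integrable g ν) (hfkg : ∀ᶠ k in l, ∀ᵐ x ∂ν, fk k x ≤ g x)
    (hlim : Tendsto (fun k => ∫ x, fk k x ∂ν) l (𝓝 (∫ x, f x ∂ν)))
    (hsup : ∀ᵐ x ∂ν, ∀ b > f x, ∀ᶠ k in l, fk k x < b) :
    Tendsto (fun k => ∫ x, |fk k x - f x| ∂ν) l (𝓝 0) := by
  have hdiff : ∀ᶠ k in l, Integrable (fun x => fk k x - f x) ν := hfk.mono fun k hk => hk.sub hf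
  have hpos : Tendsto (fun k => ∫ x, (fk k x - f x)⁺ ∂ν) l (𝓝 0) := by
    refine tendsto_integral_posPart_of_le_of_eventually_lt
      (hdiff.mono fun k hk => hk.aestronglyMeasurable) (hg.sub hf) ?_ ?_
    · exact hfkg.mono fun k hk => hk.mono fun x hx => sub_le_sub_right hx (f x)
    · filter_upwards [hsup] with x hx ε hε
      simpa only [sub_lt_iff_lt_add'] using hx (f x + ε) (lt_add_of_pos_right _ hε)
  have hint : Tendsto (fun k => ∫ x, (fk k x - f x) ∂ν) l (𝓝 0) :=
    (tendsto_sub_nhds_zero_iff.2 hlim).congr' <| hfk.mono fun k hk => (integral_sub hk hf).symm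
  exact tendsto_integral_abs_of_tendsto_integral_posPart hdiff hpos hint

end Measure

/-- Special case (identity maps) of the paper's integration Lemma 4.3:
dominated sequence with `limsup fₖ ≤ f` a.e. and convergence of integrals
implies `L¹` convergence. -/
theorem bergman_integration_lemma_id
    {M : Type*} [MeasurableSpace M] (ν : Measure M)
    (f : M → ℝ) (fk : ℕ → M → ℝ)
    (hf : Integrable f ν) (hfk : ∀ k, Integrable (fk k) ν)
    (g : M → ℝ) (hg : Integrable g ν)
    (hdom : ∀ k, ∀ᵐ x ∂ν, |fk k x| ≤ g x)
    (hlim : Tendsto (fun k => ∫ x, fk k x ∂ν) atTop (𝓝 (∫ x, f x ∂ν)))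
    (hsup : ∀ᵐ x ∂ν, limsup (fun k => fk k x) atTop ≤ f x) :
    Tendsto (fun k => ∫ x, |fk k x - f x| ∂ν) atTop (𝓝 0) := by
  have hfkg : ∀ k, ∀ᵐ x ∂ν, fk k x ≤ g x := fun k => (hdom k).mono fun _ => le_of_abs_le
  exact bergman_integration_lemma_id_general hf (.of_forall hfk) hg (.of_forall hfkg) hlim
    (ae_forall_gt_eventually_lt_of_limsup_le hfkg hsup)
end

section
/- Let n ≥ 2 and write points of ℂⁿ as (z, w) with z ∈ ℂ^{n−1} and w ∈ ℂ. Let Ω = {(z, w) ∈ ℂ^{n−1} × ℂ : Im w < |z|²} be the interior of the model pseudoconcave domain, where |z|² = Σ_{i=1}^{n−1} |z_i|². Then there exists a constant C > 0, depending only on n, such that for every function f holomorphic on Ω and every real number v < 0, |f(0, iv)|² ≤ (C / v²) ∫_{{(z,w) ∈ Ω : |z| ≤ 1, |w − iv| ≤ |v|/2}} |f|² dV, where dV is Lebesgue measure on ℂⁿ ≅ ℝ^{2n}. -/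
open MeasureTheory

/-!
A balanced set `K` is invariant under the rotations `x ↦ a • x` with `‖a‖ = 1`, so the integral of
`f` over `K` equals the average over `a` of the integrals of `f (a • x)`. Exchanging the two
integrals and applying the mean value property on the unit circle to `a ↦ f (a • x)` gives
`∫ x in K, f x = μ K • f 0`, hence the sub-mean property of `‖f‖ ^ p` by Jensen's inequality. The
region around `(0, iv)` is a translate of the balanced set formed by the unit ball times the disc of
radius `|v| / 2`, whose volume is proportional to `v ^ 2`. Averaging over this set at once replaces
the two successive sub-mean estimates, in `w` and then in `z`.
-/

open Metric Set Complex
open scoped Pointwise Real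

section BalancedMeanValue

theorem measureReal_vadd_set {G α : Type*} [AddGroup G] [AddAction G α] [MeasurableSpace α]
    (μ : Measure α) [VAddInvariantMeasure G α μ] (c : G) (s : Set α) :
    μ.real (c +ᵥ s) = μ.real s := by
  rw [measureReal_def, measure_vadd, measureReal_def]

theorem balanced_prod {𝕜 X Y : Type*} [SeminormedRing 𝕜] [SMul 𝕜 X] [SMul 𝕜 Y] {s : Set X}
    {t : Set Y} (hs : Balanced 𝕜 s) (ht : Balanced 𝕜 t) : Balanced 𝕜 (s ×ˢ t) :=
  balanced_iff_smul_mem.2 fun _ ha _ hx ↦ ⟨hs.smul_mem ha hx.1, ht.smul_mem ha hx.2⟩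

variable {E F : Type*} [NormedAddCommGroup E] [NormedSpace ℂ E]
  [NormedAddCommGroup F] [NormedSpace ℂ F] {K : Set E} {f : E → F}

theorem circleAverage_comp_smul_of_balanced [CompleteSpace F] (hK : Balanced ℂ K)
    (hf : DifferentiableOn ℂ f K) {x : E} (hx : x ∈ K) :
    Real.circleAverage (fun a : ℂ ↦ f (a • x)) 0 1 = f 0 := by
  have hdiff : DifferentiableOn ℂ (fun a : ℂ ↦ f (a • x)) (closedBall 0 1) :=
    hf.comp (by fun_prop) fun a ha ↦ hK.smul_mem (by simpa using ha) hx
  have hcont : DiffContOnCl ℂ (fun a : ℂ ↦ f (a • x)) (ball 0 |1|) := by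
    rw [abs_one]
    exact DifferentiableOn.diffContOnCl (by rwa [closure_ball _ one_ne_zero])
  rw [hcont.circleAverage, zero_smul]

theorem distribHaarChar_circle [ProperSpace E] (a : Circle) : distribHaarChar E a = 1 := by
  borelize E
  have smul_ball : (a : ℂ) • closedBall (0 : E) 1 = closedBall 0 1 :=
    balanced_closedBall_zero.smul_eq a.norm_coe
  exact distribHaarChar_eq_of_measure_smul_eq_mul (μ := Measure.addHaar)
    (measure_closedBall_pos _ 0 one_pos).ne' (isCompact_closedBall 0 1).measure_ne_top
    ((congrArg Measure.addHaar smul_ball).trans (one_mul _).symm)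

variable [MeasurableSpace E] [BorelSpace E] {μ : Measure E}

theorem smulInvariantMeasure_circle [ProperSpace E] (μ : Measure E) [μ.IsAddHaarMeasure] :
    SMulInvariantMeasure Circle E μ :=
  ⟨fun a s _ ↦ by
    rw [preimage_smul, ← distribHaarChar_mul μ, distribHaarChar_circle, ENNReal.coe_one, one_mul]⟩

theorem setIntegral_circle_smul_of_balanced [SMulInvariantMeasure Circle E μ]
    (hK : Balanced ℂ K) (f : E → F) (a : Circle) :
    ∫ x in K, f (a • x) ∂μ = ∫ x in K, f x ∂μ := by
  have smul_K : a • K = K := hK.smul_eq a.norm_coe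
  conv_rhs => rw [← smul_K]
  exact ((measurePreserving_smul a μ).setIntegral_image_emb
    (measurableEmbedding_const_smul a) f K).symm

variable [CompleteSpace F]

theorem setIntegral_of_balanced [SMulInvariantMeasure Circle E μ] [IsFiniteMeasureOnCompacts μ]
    [SFinite μ] (hK : Balanced ℂ K) (hKc : IsCompact K) (hf : DifferentiableOn ℂ f K) :
    ∫ x in K, f x ∂μ = μ.real K • f 0 := by
  have hcont : ContinuousOn (fun q : ℝ × E ↦ f (circleMap 0 1 q.1 • q.2)) (uIcc 0 (2 * π) ×ˢ K) :=
    hf.continuousOn.comp (by fun_prop) fun q hq ↦ hK.smul_mem (by simp) hq.2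
  have hint : Integrable (Function.uncurry fun (θ : ℝ) x ↦ f (circleMap 0 1 θ • x))
      ((volume.restrict (uIoc 0 (2 * π))).prod (μ.restrict K)) := by
    rw [Measure.prod_restrict]
    exact (hcont.integrableOn_compact (isCompact_uIcc.prod hKc)).mono_set
      (prod_mono uIoc_subset_uIcc subset_rfl)
  have rotate (θ : ℝ) : ∫ x in K, f (circleMap 0 1 θ • x) ∂μ = ∫ x in K, f x ∂μ := by
    simpa [circleMap, Circle.smul_def] using
      setIntegral_circle_smul_of_balanced (μ := μ) hK f (Circle.exp θ)
  calc ∫ x in K, f x ∂μ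
      = Real.circleAverage (fun a : ℂ ↦ ∫ x in K, f (a • x) ∂μ) 0 1 := by
        simp only [Real.circleAverage_def, rotate, intervalIntegral.integral_const, sub_zero,
          inv_smul_smul₀ Real.two_pi_pos.ne']
    _ = ∫ x in K, Real.circleAverage (fun a : ℂ ↦ f (a • x)) 0 1 ∂μ := by
        simp only [Real.circleAverage_def]
        rw [intervalIntegral_integral_swap hint, integral_smul]
    _ = ∫ _ in K, f 0 ∂μ := setIntegral_congr_fun hKc.measurableSet fun x hx ↦
        circleAverage_comp_smul_of_balanced hK hf hx
    _ = μ.real K • f 0 := setIntegral_const _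

variable [ProperSpace E] [μ.IsAddHaarMeasure] {c : E}

theorem setAverage_vadd_of_balanced (hK : Balanced ℂ K) (hKc : IsCompact K) (hμK : μ K ≠ 0)
    (hf : DifferentiableOn ℂ f (c +ᵥ K)) :
    ⨍ x in c +ᵥ K, f x ∂μ = f c := by
  have := smulInvariantMeasure_circle μ
  have translate : ∫ x in c +ᵥ K, f x ∂μ = ∫ x in K, f (c + x) ∂μ :=
    (measurePreserving_add_left μ c).setIntegral_image_emb (measurableEmbedding_addLeft c) f K
  have hdiff : DifferentiableOn ℂ (fun x ↦ f (c + x)) K :=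
    hf.comp (by fun_prop) fun x hx ↦ vadd_mem_vadd_set hx
  have measure_ne_zero : μ.real K ≠ 0 := (measureReal_ne_zero_iff hKc.measure_ne_top).2 hμK
  rw [setAverage_eq, translate, setIntegral_of_balanced hK hKc hdiff, measureReal_vadd_set,
    inv_smul_smul₀ measure_ne_zero, add_zero]

theorem convexOn_le_setAverage_vadd_of_balanced {φ : F → ℝ} (hφ : ConvexOn ℝ univ φ)
    (hφc : Continuous φ) (hK : Balanced ℂ K) (hKc : IsCompact K) (hμK : μ K ≠ 0)
    (hf : DifferentiableOn ℂ f (c +ᵥ K)) :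
    φ (f c) ≤ ⨍ x in c +ᵥ K, φ (f x) ∂μ := by
  have hcompact : IsCompact (c +ᵥ K) := hKc.vadd c
  rw [← setAverage_vadd_of_balanced hK hKc hμK hf]
  exact hφ.map_set_average_le hφc.continuousOn isClosed_univ (by rwa [measure_vadd])
    hcompact.measure_ne_top (by simp) (hf.continuousOn.integrableOn_compact hcompact)
    ((hφc.comp_continuousOn hf.continuousOn).integrableOn_compact hcompact)

end BalancedMeanValue

section ModelDomain

variable (ι : Type*) [Fintype ι]

/-- The interior `Ω = {(z, w) : Im w < |z|²}` of the model pseudoconcave domain, with `z` indexed by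
an arbitrary finite type. -/
def modelDomain : Set ((ι → ℂ) × ℂ) :=
  {p | p.2.im < ∑ i, ‖p.1 i‖ ^ 2}

/-- The closed Euclidean unit ball, as a subset of `ι → ℂ`, whose own norm is the sup norm. -/
def euclideanUnitBall : Set (ι → ℂ) :=
  {z | ∑ i, ‖z i‖ ^ 2 ≤ 1}

theorem euclideanUnitBall_eq_preimage :
    euclideanUnitBall ι = (EuclideanSpace.equiv ι ℂ).symm ⁻¹' closedBall 0 1 := by
  ext z
  simp [euclideanUnitBall, EuclideanSpace.norm_eq]

theorem isCompact_euclideanUnitBall : IsCompact (euclideanUnitBall ι) := by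
  rw [euclideanUnitBall_eq_preimage]
  exact (EuclideanSpace.equiv ι ℂ).symm.toHomeomorph.isCompact_preimage.2 (isCompact_closedBall 0 1)

theorem balanced_euclideanUnitBall : Balanced ℂ (euclideanUnitBall ι) := by
  rw [euclideanUnitBall_eq_preimage]
  exact (balanced_closedBall_zero (𝕜 := ℂ)).mulActionHom_preimage
    ((EuclideanSpace.equiv ι ℂ).symm : (ι → ℂ) →ₗ[ℂ] EuclideanSpace ℂ ι).toMulActionHom

theorem volume_real_euclideanUnitBall_pos : 0 < volume.real (euclideanUnitBall ι) := by
  have mem_nhds : euclideanUnitBall ι ∈ nhds 0 := by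
    rw [euclideanUnitBall_eq_preimage]
    exact (EuclideanSpace.equiv ι ℂ).symm.continuous.continuousAt.preimage_mem_nhds
      (by simpa using closedBall_mem_nhds (0 : EuclideanSpace ℂ ι) one_pos)
  exact ENNReal.toReal_pos (Measure.measure_pos_of_mem_nhds volume mem_nhds).ne'
    (isCompact_euclideanUnitBall ι).measure_ne_top

variable {ι}

theorem vadd_euclideanUnitBall_prod_closedBall_eq {v : ℝ} (hv : v < 0) :
    ((0, I * v) : (ι → ℂ) × ℂ) +ᵥ (euclideanUnitBall ι ×ˢ closedBall (0 : ℂ) (|v| / 2)) =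
      {p | p ∈ modelDomain ι ∧ p.1 ∈ euclideanUnitBall ι ∧ ‖p.2 - I * v‖ ≤ |v| / 2} := by
  ext p
  have im_lt (hp : ‖p.2 - I * v‖ ≤ |v| / 2) : p.2.im < ∑ i, ‖p.1 i‖ ^ 2 := by
    have him : p.2.im - v ≤ |v| / 2 := by
      simpa using (le_abs_self _).trans ((abs_im_le_norm (p.2 - I * v)).trans hp)
    rw [abs_of_neg hv] at him
    have : 0 ≤ ∑ i, ‖p.1 i‖ ^ 2 := by positivity
    linarith
  have mem_vadd : p ∈ ((0, I * v) : (ι → ℂ) × ℂ) +ᵥ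
      (euclideanUnitBall ι ×ˢ closedBall (0 : ℂ) (|v| / 2)) ↔
      p.1 ∈ euclideanUnitBall ι ∧ ‖p.2 - I * v‖ ≤ |v| / 2 := by
    simp [mem_vadd_set_iff_neg_vadd_mem, neg_add_eq_sub]
  exact mem_vadd.trans ⟨fun hp ↦ ⟨im_lt hp.2, hp⟩, And.right⟩

theorem volume_real_euclideanUnitBall_prod_closedBall (w : ℂ) {r : ℝ} (hr : 0 ≤ r) :
    volume.real (euclideanUnitBall ι ×ˢ closedBall w r) =
      volume.real (euclideanUnitBall ι) * (π * r ^ 2) := by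
  rw [Measure.volume_eq_prod, measureReal_prod_prod, measureReal_def (s := closedBall w r),
    Complex.volume_closedBall]
  simp [hr, mul_comm]

theorem bound_on_inward_ray_general {F : Type*} [NormedAddCommGroup F] [NormedSpace ℂ F]
    [CompleteSpace F] {f : (ι → ℂ) × ℂ → F} (hf : DifferentiableOn ℂ f (modelDomain ι))
    (p : ℕ) {v : ℝ} (hv : v < 0) :
    ‖f (0, I * v)‖ ^ p ≤ 4 / (π * volume.real (euclideanUnitBall ι)) / v ^ 2 *
      ∫ q in {q | q ∈ modelDomain ι ∧ q.1 ∈ euclideanUnitBall ι ∧ ‖q.2 - I * v‖ ≤ |v| / 2},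
        ‖f q‖ ^ p := by
  set K := euclideanUnitBall ι ×ˢ closedBall (0 : ℂ) (|v| / 2)
  have region_eq := vadd_euclideanUnitBall_prod_closedBall_eq (ι := ι) hv
  have volume_K : volume.real K = volume.real (euclideanUnitBall ι) * (π * (|v| / 2) ^ 2) :=
    volume_real_euclideanUnitBall_prod_closedBall 0 (by positivity)
  have volume_pos : 0 < volume.real K := by
    have := volume_real_euclideanUnitBall_pos ι
    have v_ne_zero := hv.ne
    rw [volume_K]; positivity
  have : (volume : Measure ((ι → ℂ) × ℂ)).IsAddHaarMeasure :=
    Measure.prod.instIsAddHaarMeasure volume volume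
  have sub_mean : ‖f (0, I * v)‖ ^ p ≤ ⨍ q in ((0, I * v) : (ι → ℂ) × ℂ) +ᵥ K, ‖f q‖ ^ p :=
    convexOn_le_setAverage_vadd_of_balanced (φ := fun y ↦ ‖y‖ ^ p)
      (convexOn_univ_norm.pow (fun _ _ ↦ norm_nonneg _) p) (by fun_prop)
      (balanced_prod (balanced_euclideanUnitBall ι) balanced_closedBall_zero)
      ((isCompact_euclideanUnitBall ι).prod (isCompact_closedBall 0 _))
      (ENNReal.toReal_pos_iff.1 volume_pos).1.ne'
      (hf.mono (region_eq.trans_subset fun q hq ↦ hq.1))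
  have constant_eq : (volume.real K)⁻¹ = 4 / (π * volume.real (euclideanUnitBall ι)) / v ^ 2 := by
    rw [volume_K, div_pow, sq_abs]
    field_simp
    norm_num
  rwa [setAverage_eq, smul_eq_mul, measureReal_vadd_set, constant_eq, region_eq] at sub_mean

end ModelDomain

/-- Second appendix lemma: for `f` holomorphic on the interior
`Ω = {(z,w) : Im w < |z|²}` of the model pseudoconcave domain and `v < 0`,
`|f(0, iv)|² ≤ (C/v²) ∫_{|z| ≤ 1, |w - iv| ≤ |v|/2, (z,w) ∈ Ω} |f|² dV`. -/
theorem bound_on_inward_ray (n : ℕ) (hn : 2 ≤ n) :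
    ∃ C : ℝ, 0 < C ∧ ∀ f : (Fin (n - 1) → ℂ) × ℂ → ℂ,
      DifferentiableOn ℂ f
        {p : (Fin (n - 1) → ℂ) × ℂ | p.2.im < ∑ i, ‖p.1 i‖ ^ 2} →
      ∀ v : ℝ, v < 0 →
        ‖f (0, Complex.I * v)‖ ^ 2 ≤ (C / v ^ 2) *
          ∫ p in {p : (Fin (n - 1) → ℂ) × ℂ | p.2.im < ∑ i, ‖p.1 i‖ ^ 2 ∧
              (∑ i, ‖p.1 i‖ ^ 2) ≤ 1 ∧ ‖p.2 - Complex.I * v‖ ≤ |v| / 2},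
            ‖f p‖ ^ 2 := by
  have volume_pos := volume_real_euclideanUnitBall_pos (Fin (n - 1))
  exact ⟨4 / (π * volume.real (euclideanUnitBall (Fin (n - 1)))), by positivity,
    fun _ hf _ hv ↦ bound_on_inward_ray_general hf 2 hv⟩
end
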